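/- (Theorem 2) Let k* be an integer with m < k* < N. Assume ĉ_si(s) ≥ 0 for every s with k* < s ≤ N, and assume Γ(k*) ≥ g_ef(s) for every s with k* < s ≤ N. Then the supremum over all probability vectors p of z(p, ĉ) equals Γ(k*), and it is attained at every probability vector supported on {1,…,k*}; in particular z(p*, ĉ) = Γ(k*). -/

import Mathlib

open Finset

noncomputable def Hfun (gef gsi gin : ℕ → ℝ) (m k : ℕ) : ℝ :=
  (∑ s ∈ Finset.Icc 1 (min k m), 1 / (gsi s + gin s)) +
    ∑ s ∈ Finset.Icc (m + 1) k, 1 / (gef s + gin s)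

noncomputable def Gfun (gef gsi gin : ℕ → ℝ) (m k : ℕ) : ℝ :=
  (∑ s ∈ Finset.Icc 1 (min k m), gsi s / (gsi s + gin s)) +
    ∑ s ∈ Finset.Icc (m + 1) k, gef s / (gef s + gin s)

noncomputable def Gam (gef gsi gin : ℕ → ℝ) (kef ksi N m k : ℕ) : ℝ :=
  ((kef : ℝ) + (ksi : ℝ) - (N : ℝ) + Gfun gef gsi gin m k) / Hfun gef gsi gin m k

noncomputable def pstar (gef gsi gin : ℕ → ℝ) (m kstar s : ℕ) : ℝ :=
  if s ≤ m then 1 / (Hfun gef gsi gin m kstar * (gsi s + gin s))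
  else if s ≤ kstar then 1 / (Hfun gef gsi gin m kstar * (gef s + gin s))
  else 0

noncomputable def chatEf (gef gsi gin : ℕ → ℝ) (kef ksi N m kstar s : ℕ) : ℝ :=
  if s ≤ m then 0
  else if s ≤ kstar then
    (Gam gef gsi gin kef ksi N m kstar + gin s) / (gef s + gin s)
  else
    ((kef : ℝ) - ∑ u ∈ Finset.Icc (m + 1) kstar,
        (Gam gef gsi gin kef ksi N m kstar + gin u) / (gef u + gin u)) /
      ((N : ℝ) - (kstar : ℝ))

noncomputable def chatSi (gef gsi gin : ℕ → ℝ) (kef ksi N m kstar s : ℕ) : ℝ :=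
  if s ≤ m then
    (Gam gef gsi gin kef ksi N m kstar + gin s) / (gsi s + gin s)
  else if s ≤ kstar then 0
  else
    ((ksi : ℝ) - ∑ u ∈ Finset.Icc 1 m,
        (Gam gef gsi gin kef ksi N m kstar + gin u) / (gsi u + gin u)) /
      ((N : ℝ) - (kstar : ℝ))

noncomputable def chatIn (gef gsi gin : ℕ → ℝ) (kef ksi N m kstar s : ℕ) : ℝ :=
  1 - chatEf gef gsi gin kef ksi N m kstar s - chatSi gef gsi gin kef ksi N m kstar s

noncomputable def zGain (gef gsi gin p cef csi cin : ℕ → ℝ) (N : ℕ) : ℝ :=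
  ∑ s ∈ Finset.Icc 1 N, p s * (cef s * gef s + csi s * gsi s - cin s * gin s)

def memDelta (cef csi cin : ℕ → ℝ) (N kef ksi kin : ℕ) : Prop :=
  (∀ s ∈ Finset.Icc 1 N,
    (cef s = 0 ∨ cef s = 1) ∧ (csi s = 0 ∨ csi s = 1) ∧ (cin s = 0 ∨ cin s = 1) ∧
      cef s + csi s + cin s = 1) ∧
  (∑ s ∈ Finset.Icc 1 N, cef s) = (kef : ℝ) ∧
  (∑ s ∈ Finset.Icc 1 N, csi s) = (ksi : ℝ) ∧
  (∑ s ∈ Finset.Icc 1 N, cin s) = (kin : ℝ)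

def memDeltaT (cef csi cin : ℕ → ℝ) (N kef ksi kin : ℕ) : Prop :=
  (∀ s ∈ Finset.Icc 1 N,
    cef s ∈ Set.Icc (0 : ℝ) 1 ∧ csi s ∈ Set.Icc (0 : ℝ) 1 ∧ cin s ∈ Set.Icc (0 : ℝ) 1 ∧
      cef s + csi s + cin s = 1) ∧
  (∑ s ∈ Finset.Icc 1 N, cef s) = (kef : ℝ) ∧
  (∑ s ∈ Finset.Icc 1 N, csi s) = (ksi : ℝ) ∧
  (∑ s ∈ Finset.Icc 1 N, cin s) = (kin : ℝ)

/-!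
Call `d s = g_si s` for `s ≤ m` and `d s = g_ef s` for `s > m` the active gain of `s`. On
`{1, …, k*}` the mixture `ĉ` puts weight `(Γ + g_in s) / (d s + g_in s)` on `d s` and the
remaining weight on `-g_in s`, so every such instance yields exactly `Γ`. The value
`Γ = (k_ef + k_si - N + G) / H` is the one for which these weights sum to
`k_ef + k_si - (N - k*)`; hence beyond `k*` the weights of the effective and similar gains sum to
`1`, the incorrect gain does not occur, and the yield is at most `g_ef s ≤ Γ`. The expected gain is
a weighted average of these yields.
-/

section WeightedAverage

variable {ι R : Type*} {t : Finset ι} {p f : ι → R} {c : R}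

theorem sum_mul_eq_of_sum_eq_one [Semiring R] (hsum : ∑ i ∈ t, p i = 1)
    (hf : ∀ i ∈ t, p i ≠ 0 → f i = c) : ∑ i ∈ t, p i * f i = c := by
  calc ∑ i ∈ t, p i * f i = ∑ i ∈ t, p i * c := by
        refine Finset.sum_congr rfl fun i hi => ?_
        by_cases hpi : p i = 0
        · rw [hpi, zero_mul, zero_mul]
        · rw [hf i hi hpi]
    _ = c := by rw [← Finset.sum_mul, hsum, one_mul]

theorem sum_mul_le_of_sum_eq_one [Semiring R] [PartialOrder R] [IsOrderedRing R]
    (hp : ∀ i ∈ t, 0 ≤ p i) (hsum : ∑ i ∈ t, p i = 1) (hf : ∀ i ∈ t, f i ≤ c) :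
    ∑ i ∈ t, p i * f i ≤ c := by
  calc ∑ i ∈ t, p i * f i ≤ ∑ i ∈ t, p i * c :=
        Finset.sum_le_sum fun i hi => mul_le_mul_of_nonneg_left (hf i hi) (hp i hi)
    _ = c := by rw [← Finset.sum_mul, hsum, one_mul]

end WeightedAverage

theorem sum_Icc_one_ite_le {M : Type*} [AddCommMonoid M] (f g : ℕ → M) (m k : ℕ) :
    ∑ s ∈ Finset.Icc 1 k, (if s ≤ m then f s else g s) =
      ∑ s ∈ Finset.Icc 1 (min k m), f s + ∑ s ∈ Finset.Icc (m + 1) k, g s := by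
  have hle : (Finset.Icc 1 k).filter (· ≤ m) = Finset.Icc 1 (min k m) := by
    ext s; simp only [Finset.mem_filter, Finset.mem_Icc]; omega
  have hgt : (Finset.Icc 1 k).filter (¬ · ≤ m) = Finset.Icc (m + 1) k := by
    ext s; simp only [Finset.mem_filter, Finset.mem_Icc]; omega
  rw [Finset.sum_ite, hle, hgt]

/-- The gain `d s` that the mixture `ĉ` plays against the incorrect gain at an instance
`s ≤ k*`: the similar gain for `s ≤ m`, the effective gain afterwards. It merges the two halves
of each of the piecewise formulas defining `H`, `G`, `p*` and `ĉ`. -/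
def activeGain (gef gsi : ℕ → ℝ) (m s : ℕ) : ℝ :=
  if s ≤ m then gsi s else gef s

/-- The gain that instance `s` contributes, under the mixture `ĉ` with cutoff `k* = k`, per unit of
probability. -/
noncomputable def chatGain (gef gsi gin : ℕ → ℝ) (kef ksi N m k s : ℕ) : ℝ :=
  chatEf gef gsi gin kef ksi N m k s * gef s + chatSi gef gsi gin kef ksi N m k s * gsi s -
    chatIn gef gsi gin kef ksi N m k s * gin s

section Equalizer

variable {gef gsi gin : ℕ → ℝ} {kef ksi N m k s : ℕ}

theorem activeGain_add_pos (hsi : ∀ s ∈ Finset.Icc 1 m, 0 < gsi s + gin s)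
    (hef : ∀ s ∈ Finset.Icc (m + 1) k, 0 < gef s + gin s) (hs : s ∈ Finset.Icc 1 k) :
    0 < activeGain gef gsi m s + gin s := by
  rw [Finset.mem_Icc] at hs
  unfold activeGain
  split_ifs with hsm
  · exact hsi s (Finset.mem_Icc.2 ⟨hs.1, hsm⟩)
  · exact hef s (Finset.mem_Icc.2 ⟨by omega, hs.2⟩)

theorem Hfun_eq_sum_activeGain :
    Hfun gef gsi gin m k = ∑ s ∈ Finset.Icc 1 k, 1 / (activeGain gef gsi m s + gin s) := by
  unfold Hfun
  rw [← sum_Icc_one_ite_le]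
  refine Finset.sum_congr rfl fun s _ => ?_
  unfold activeGain
  split_ifs <;> rfl

theorem Gfun_eq_sum_activeGain :
    Gfun gef gsi gin m k =
      ∑ s ∈ Finset.Icc 1 k, activeGain gef gsi m s / (activeGain gef gsi m s + gin s) := by
  unfold Gfun
  rw [← sum_Icc_one_ite_le]
  refine Finset.sum_congr rfl fun s _ => ?_
  unfold activeGain
  split_ifs <;> rfl

theorem Hfun_pos (hk : 0 < k)
    (hpos : ∀ s ∈ Finset.Icc 1 k, 0 < activeGain gef gsi m s + gin s) :
    0 < Hfun gef gsi gin m k := by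
  rw [Hfun_eq_sum_activeGain]
  exact Finset.sum_pos (fun s hs => one_div_pos.2 (hpos s hs)) (Finset.nonempty_Icc.2 hk)

theorem pstar_of_le (hs : s ≤ k) :
    pstar gef gsi gin m k s =
      (Hfun gef gsi gin m k)⁻¹ * (1 / (activeGain gef gsi m s + gin s)) := by
  unfold pstar activeGain
  split_ifs <;> rw [one_div, one_div, mul_inv]

theorem pstar_of_lt (hmk : m ≤ k) (hs : k < s) : pstar gef gsi gin m k s = 0 := by
  rw [pstar, if_neg (by omega), if_neg (by omega)]

theorem pstar_nonneg (hmk : m ≤ k)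
    (hpos : ∀ s ∈ Finset.Icc 1 k, 0 < activeGain gef gsi m s + gin s) (hs : 1 ≤ s) :
    0 ≤ pstar gef gsi gin m k s := by
  rcases le_or_gt s k with hsk | hks
  · have hsk' : s ∈ Finset.Icc 1 k := Finset.mem_Icc.2 ⟨hs, hsk⟩
    rw [pstar_of_le hsk]
    exact mul_nonneg (inv_nonneg.2 (Hfun_pos (by omega) hpos).le) (one_div_pos.2 (hpos s hsk')).le
  · rw [pstar_of_lt hmk hks]

theorem sum_pstar (hmk : m ≤ k) (hkN : k ≤ N) (hH : Hfun gef gsi gin m k ≠ 0) :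
    ∑ s ∈ Finset.Icc 1 N, pstar gef gsi gin m k s = 1 := by
  have hsupport : ∑ s ∈ Finset.Icc 1 k, pstar gef gsi gin m k s =
      ∑ s ∈ Finset.Icc 1 N, pstar gef gsi gin m k s := by
    refine Finset.sum_subset (Finset.Icc_subset_Icc_right hkN) fun s hsN hsk => ?_
    simp only [Finset.mem_Icc] at hsN hsk
    exact pstar_of_lt hmk (by omega)
  calc ∑ s ∈ Finset.Icc 1 N, pstar gef gsi gin m k s
      = ∑ s ∈ Finset.Icc 1 k,
          (Hfun gef gsi gin m k)⁻¹ * (1 / (activeGain gef gsi m s + gin s)) := by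
        rw [← hsupport]
        exact Finset.sum_congr rfl fun s hs => pstar_of_le (Finset.mem_Icc.1 hs).2
    _ = 1 := by rw [← Finset.mul_sum, ← Hfun_eq_sum_activeGain, inv_mul_cancel₀ hH]

theorem Gam_mul_Hfun (hH : Hfun gef gsi gin m k ≠ 0) :
    Gam gef gsi gin kef ksi N m k * Hfun gef gsi gin m k =
      kef + ksi - N + Gfun gef gsi gin m k :=
  div_mul_cancel₀ _ hH

theorem sum_Gam_add_div (hH : Hfun gef gsi gin m k ≠ 0)
    (hne : ∀ s ∈ Finset.Icc 1 k, activeGain gef gsi m s + gin s ≠ 0) :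
    ∑ s ∈ Finset.Icc 1 k,
        (Gam gef gsi gin kef ksi N m k + gin s) / (activeGain gef gsi m s + gin s) =
      kef + ksi - N + k := by
  have hterm : ∀ s ∈ Finset.Icc 1 k,
      (Gam gef gsi gin kef ksi N m k + gin s) / (activeGain gef gsi m s + gin s) =
        Gam gef gsi gin kef ksi N m k * (1 / (activeGain gef gsi m s + gin s)) + 1 -
          activeGain gef gsi m s / (activeGain gef gsi m s + gin s) := by
    intro s hs
    have hs' := hne s hs
    field_simp
    ring
  rw [Finset.sum_congr rfl hterm, Finset.sum_sub_distrib, Finset.sum_add_distrib,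
    ← Finset.mul_sum, ← Hfun_eq_sum_activeGain, ← Gfun_eq_sum_activeGain, Gam_mul_Hfun hH]
  simp only [Finset.sum_const, Nat.card_Icc, add_tsub_cancel_right, nsmul_eq_mul, mul_one]
  ring

theorem chatGain_of_le (hs : s ≤ k) (hne : activeGain gef gsi m s + gin s ≠ 0) :
    chatGain gef gsi gin kef ksi N m k s = Gam gef gsi gin kef ksi N m k := by
  unfold chatGain chatIn chatEf chatSi
  unfold activeGain at hne
  split_ifs at hne ⊢ <;> field_simp <;> ring

theorem chatEf_add_chatSi_of_lt (hmk : m ≤ k) (hkN : k < N) (hH : Hfun gef gsi gin m k ≠ 0)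
    (hne : ∀ s ∈ Finset.Icc 1 k, activeGain gef gsi m s + gin s ≠ 0) (hs : k < s) :
    chatEf gef gsi gin kef ksi N m k s + chatSi gef gsi gin kef ksi N m k s = 1 := by
  have hsplit : ∑ u ∈ Finset.Icc 1 m,
        (Gam gef gsi gin kef ksi N m k + gin u) / (gsi u + gin u) +
      ∑ u ∈ Finset.Icc (m + 1) k,
        (Gam gef gsi gin kef ksi N m k + gin u) / (gef u + gin u) = kef + ksi - N + k := by
    have hite := sum_Icc_one_ite_le
      (fun u => (Gam gef gsi gin kef ksi N m k + gin u) / (gsi u + gin u))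
      (fun u => (Gam gef gsi gin kef ksi N m k + gin u) / (gef u + gin u)) m k
    rw [min_eq_right hmk] at hite
    rw [← sum_Gam_add_div hH hne, ← hite]
    refine Finset.sum_congr rfl fun u _ => ?_
    unfold activeGain
    split_ifs <;> rfl
  have hNk : (N : ℝ) - k ≠ 0 := sub_ne_zero.2 (Nat.cast_injective.ne hkN.ne')
  rw [chatEf, chatSi, if_neg (by omega), if_neg (by omega), if_neg (by omega),
    if_neg (by omega), ← add_div, div_eq_one_iff_eq hNk]
  linarith

theorem chatGain_le_gef
    (hone : chatEf gef gsi gin kef ksi N m k s + chatSi gef gsi gin kef ksi N m k s = 1)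
    (hcsi : 0 ≤ chatSi gef gsi gin kef ksi N m k s) (hle : gsi s ≤ gef s) :
    chatGain gef gsi gin kef ksi N m k s ≤ gef s := by
  have hef : chatEf gef gsi gin kef ksi N m k s = 1 - chatSi gef gsi gin kef ksi N m k s :=
    eq_sub_of_add_eq hone
  have hin : chatIn gef gsi gin kef ksi N m k s = 0 := by rw [chatIn, hef]; ring
  calc chatGain gef gsi gin kef ksi N m k s
      = gef s - chatSi gef gsi gin kef ksi N m k s * (gef s - gsi s) := by
        rw [chatGain, hef, hin]; ring
    _ ≤ gef s := sub_le_self _ (mul_nonneg hcsi (sub_nonneg.2 hle))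

theorem zGain_chat_eq_sum_chatGain (p : ℕ → ℝ) :
    zGain gef gsi gin p (chatEf gef gsi gin kef ksi N m k) (chatSi gef gsi gin kef ksi N m k)
      (chatIn gef gsi gin kef ksi N m k) N =
      ∑ s ∈ Finset.Icc 1 N, p s * chatGain gef gsi gin kef ksi N m k s :=
  rfl

theorem zGain_chat_of_support_le (hne : ∀ s ∈ Finset.Icc 1 k, activeGain gef gsi m s + gin s ≠ 0)
    {p : ℕ → ℝ} (hsum : ∑ s ∈ Finset.Icc 1 N, p s = 1)
    (hsupport : ∀ s : ℕ, k < s → s ≤ N → p s = 0) :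
    zGain gef gsi gin p (chatEf gef gsi gin kef ksi N m k) (chatSi gef gsi gin kef ksi N m k)
      (chatIn gef gsi gin kef ksi N m k) N = Gam gef gsi gin kef ksi N m k := by
  rw [zGain_chat_eq_sum_chatGain]
  refine sum_mul_eq_of_sum_eq_one hsum fun s hs hps => ?_
  rw [Finset.mem_Icc] at hs
  have hsk : s ≤ k := not_lt.1 fun hks => hps (hsupport s hks hs.2)
  exact chatGain_of_le hsk (hne s (Finset.mem_Icc.2 ⟨hs.1, hsk⟩))

theorem zGain_chat_le (hmk : m ≤ k) (hH : Hfun gef gsi gin m k ≠ 0)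
    (hne : ∀ s ∈ Finset.Icc 1 k, activeGain gef gsi m s + gin s ≠ 0)
    (hsile : ∀ s : ℕ, k < s → s ≤ N → gsi s ≤ gef s)
    (hcsi : ∀ s : ℕ, k < s → s ≤ N → 0 ≤ chatSi gef gsi gin kef ksi N m k s)
    (hgam : ∀ s : ℕ, k < s → s ≤ N → gef s ≤ Gam gef gsi gin kef ksi N m k)
    {p : ℕ → ℝ} (hp : ∀ s ∈ Finset.Icc 1 N, 0 ≤ p s) (hsum : ∑ s ∈ Finset.Icc 1 N, p s = 1) :
    zGain gef gsi gin p (chatEf gef gsi gin kef ksi N m k) (chatSi gef gsi gin kef ksi N m k)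
      (chatIn gef gsi gin kef ksi N m k) N ≤ Gam gef gsi gin kef ksi N m k := by
  rw [zGain_chat_eq_sum_chatGain]
  refine sum_mul_le_of_sum_eq_one hp hsum fun s hs => ?_
  rw [Finset.mem_Icc] at hs
  rcases le_or_gt s k with hsk | hks
  · exact (chatGain_of_le hsk (hne s (Finset.mem_Icc.2 ⟨hs.1, hsk⟩))).le
  · have hkN : k < N := hks.trans_le hs.2
    have hone := chatEf_add_chatSi_of_lt (kef := kef) (ksi := ksi) hmk hkN hH hne hks
    exact (chatGain_le_gef hone (hcsi s hks hs.2) (hsile s hks hs.2)).trans (hgam s hks hs.2)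

end Equalizer

theorem stmt_12_general
    (gef gsi gin : ℕ → ℝ) (N kef ksi m kstar : ℕ)
    (hk0 : 0 < kstar) (hk1 : m ≤ kstar) (hk2 : kstar ≤ N)
    (hsi : ∀ s ∈ Finset.Icc 1 m, 0 < gsi s + gin s)
    (hef : ∀ s ∈ Finset.Icc (m + 1) kstar, 0 < gef s + gin s)
    (hsile : ∀ s : ℕ, kstar < s → s ≤ N → gsi s ≤ gef s)
    (hcsi : ∀ s : ℕ, kstar < s → s ≤ N → 0 ≤ chatSi gef gsi gin kef ksi N m kstar s)
    (hgam : ∀ s : ℕ, kstar < s → s ≤ N → gef s ≤ Gam gef gsi gin kef ksi N m kstar) :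
    IsGreatest
      {x : ℝ | ∃ p : ℕ → ℝ, (∀ s ∈ Finset.Icc 1 N, 0 ≤ p s) ∧
        (∑ s ∈ Finset.Icc 1 N, p s) = 1 ∧
        zGain gef gsi gin p (chatEf gef gsi gin kef ksi N m kstar)
          (chatSi gef gsi gin kef ksi N m kstar)
          (chatIn gef gsi gin kef ksi N m kstar) N = x}
      (Gam gef gsi gin kef ksi N m kstar) ∧
    (∀ p : ℕ → ℝ, (∑ s ∈ Finset.Icc 1 N, p s) = 1 →
      (∀ s : ℕ, kstar < s → s ≤ N → p s = 0) →
      zGain gef gsi gin p (chatEf gef gsi gin kef ksi N m kstar)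
          (chatSi gef gsi gin kef ksi N m kstar)
          (chatIn gef gsi gin kef ksi N m kstar) N =
        Gam gef gsi gin kef ksi N m kstar) ∧
    zGain gef gsi gin (pstar gef gsi gin m kstar)
        (chatEf gef gsi gin kef ksi N m kstar)
        (chatSi gef gsi gin kef ksi N m kstar)
        (chatIn gef gsi gin kef ksi N m kstar) N =
      Gam gef gsi gin kef ksi N m kstar := by
  have hpos : ∀ s ∈ Finset.Icc 1 kstar, 0 < activeGain gef gsi m s + gin s :=
    fun s hs => activeGain_add_pos hsi hef hs
  have hne : ∀ s ∈ Finset.Icc 1 kstar, activeGain gef gsi m s + gin s ≠ 0 :=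
    fun s hs => (hpos s hs).ne'
  have hH : Hfun gef gsi gin m kstar ≠ 0 := (Hfun_pos hk0 hpos).ne'
  have hpsum : ∑ s ∈ Finset.Icc 1 N, pstar gef gsi gin m kstar s = 1 := sum_pstar hk1 hk2 hH
  have hpstar := zGain_chat_of_support_le (kef := kef) (ksi := ksi) hne hpsum
    fun s hks _ => pstar_of_lt hk1 hks
  refine ⟨⟨⟨_, fun s hs => pstar_nonneg hk1 hpos (Finset.mem_Icc.1 hs).1, hpsum, hpstar⟩, ?_⟩,
    fun p => zGain_chat_of_support_le hne, hpstar⟩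
  rintro _ ⟨p, hp, hsum, rfl⟩
  exact zGain_chat_le hk1 hH hne hsile hcsi hgam hp hsum

theorem stmt_12
    (gef gsi gin : ℕ → ℝ) (N kef ksi kin m kstar : ℕ)
    (hN : 0 < N) (hm : m = ksi + kin) (hsum : kef + ksi + kin = N)
    (hgef : ∀ s ∈ Finset.Icc 1 N, 0 < gef s)
    (hgsi : ∀ s ∈ Finset.Icc 1 N, 0 < gsi s)
    (hgin : ∀ s ∈ Finset.Icc 1 N, 0 < gin s)
    (hsilt : ∀ s ∈ Finset.Icc 1 N, gsi s < gef s)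
    (hinlt : ∀ s ∈ Finset.Icc 1 N, gin s < gef s)
    (hdec : ∀ s ∈ Finset.Icc 1 N, ∀ t ∈ Finset.Icc 1 N, s < t → gef t < gef s)
    (hk1 : m < kstar) (hk2 : kstar < N)
    (hcsi : ∀ s : ℕ, kstar < s → s ≤ N → 0 ≤ chatSi gef gsi gin kef ksi N m kstar s)
    (hgam : ∀ s : ℕ, kstar < s → s ≤ N → gef s ≤ Gam gef gsi gin kef ksi N m kstar) :
    IsGreatest
      {x : ℝ | ∃ p : ℕ → ℝ, (∀ s ∈ Finset.Icc 1 N, 0 ≤ p s) ∧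
        (∑ s ∈ Finset.Icc 1 N, p s) = 1 ∧
        zGain gef gsi gin p (chatEf gef gsi gin kef ksi N m kstar)
          (chatSi gef gsi gin kef ksi N m kstar)
          (chatIn gef gsi gin kef ksi N m kstar) N = x}
      (Gam gef gsi gin kef ksi N m kstar) ∧
    (∀ p : ℕ → ℝ, (∀ s ∈ Finset.Icc 1 N, 0 ≤ p s) → (∑ s ∈ Finset.Icc 1 N, p s) = 1 →
      (∀ s : ℕ, kstar < s → s ≤ N → p s = 0) →
      zGain gef gsi gin p (chatEf gef gsi gin kef ksi N m kstar)
          (chatSi gef gsi gin kef ksi N m kstar)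
          (chatIn gef gsi gin kef ksi N m kstar) N =
        Gam gef gsi gin kef ksi N m kstar) ∧
    zGain gef gsi gin (pstar gef gsi gin m kstar)
        (chatEf gef gsi gin kef ksi N m kstar)
        (chatSi gef gsi gin kef ksi N m kstar)
        (chatIn gef gsi gin kef ksi N m kstar) N =
      Gam gef gsi gin kef ksi N m kstar := by
  obtain ⟨hgreatest, hattained, hpstar⟩ := stmt_12_general gef gsi gin N kef ksi m kstar
    (by omega) hk1.le hk2.le (by grind) (by grind) (by grind) hcsi hgam
  exact ⟨hgreatest, fun p _ => hattained p, hpstar⟩
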